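/- arXiv:1907.00726 — 4 statements merged into one kernel-verified Lean document; each statement's English description precedes it below -/
import Mathlib

section
/- Let V be a real vector space and let p, q be real numbers with p² < 6q. If J_M is a linear endomorphism of V satisfying J_M ∘ J_M - p • J_M + (3q/2) • id = 0, then the endomorphism J := (1/Real.sqrt (6q - p²)) • (2 • J_M - p • id) satisfies J ∘ J = - id, and likewise -J satisfies (-J) ∘ (-J) = - id; i.e., both are complex structures on V. -/
theorem two_smul_sub_smul_one_mul_self {R A : Type*} [CommRing R] [NonAssocRing A] [Module R A]
    [IsScalarTower R A A] [SMulCommClass R A A] {p r : R} {a : A}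
    (h : a * a - p • a + r • (1 : A) = 0) :
    ((2 : R) • a - p • (1 : A)) * ((2 : R) • a - p • (1 : A)) = (4 * r - p ^ 2) • (-1 : A) := by
  have completed_square : ((2 : R) • a - p • (1 : A)) * ((2 : R) • a - p • (1 : A)) =
      (4 : R) • (a * a - p • a + r • (1 : A)) + (4 * r - p ^ 2) • (-1 : A) := by
    simp only [sub_mul, mul_sub, smul_mul_assoc, mul_smul_comm, mul_one, one_mul]
    module
  rw [completed_square, h, smul_zero, zero_add]

theorem one_div_sqrt_smul_mul_self {A : Type*} [NonUnitalNonAssocSemiring A] [Module ℝ A]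
    [IsScalarTower ℝ A A] [SMulCommClass ℝ A A] {d : ℝ} (hd : 0 < d) {x y : A}
    (h : x * x = d • y) :
    ((1 / Real.sqrt d) • x) * ((1 / Real.sqrt d) • x) = y := by
  have inv_sqrt_mul_self : 1 / Real.sqrt d * (1 / Real.sqrt d) = d⁻¹ := by
    rw [div_mul_div_comm, Real.mul_self_sqrt hd.le, one_mul, one_div]
  rw [smul_mul_smul_comm, inv_sqrt_mul_self, h, inv_smul_smul₀ hd.ne']

theorem metallic_gives_complex_structures_general {A : Type*} [NonAssocRing A] [Module ℝ A]
    [IsScalarTower ℝ A A] [SMulCommClass ℝ A A] {p r : ℝ} (hpr : p ^ 2 < 4 * r) {a : A}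
    (h : a * a - p • a + r • (1 : A) = 0) :
    ((1 / Real.sqrt (4 * r - p ^ 2)) • ((2 : ℝ) • a - p • (1 : A))) *
        ((1 / Real.sqrt (4 * r - p ^ 2)) • ((2 : ℝ) • a - p • (1 : A))) = -1 ∧
      (-((1 / Real.sqrt (4 * r - p ^ 2)) • ((2 : ℝ) • a - p • (1 : A)))) *
        (-((1 / Real.sqrt (4 * r - p ^ 2)) • ((2 : ℝ) • a - p • (1 : A)))) = -1 := by
  have square_eq_neg_one :=
    one_div_sqrt_smul_mul_self (sub_pos.mpr hpr) (two_smul_sub_smul_one_mul_self h)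
  exact ⟨square_eq_neg_one, (neg_mul_neg _ _).trans square_eq_neg_one⟩

/-- If `J_M` is an almost complex metallic structure on a real vector
space `V` (with `p² < 6q`), then `J := (1/√(6q - p²)) • (2 J_M - p id)` and `-J` are
both almost complex structures on `V`. -/
theorem metallic_gives_complex_structures {V : Type*} [AddCommGroup V] [Module ℝ V]
    (p q : ℝ) (hpq : p ^ 2 < 6 * q) (JM : V →ₗ[ℝ] V)
    (h : JM ∘ₗ JM - p • JM + (3 * q / 2) • (LinearMap.id : V →ₗ[ℝ] V) = 0) :
    (((1 / Real.sqrt (6 * q - p ^ 2)) • ((2 : ℝ) • JM - p • (LinearMap.id : V →ₗ[ℝ] V))) ∘ₗ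
      ((1 / Real.sqrt (6 * q - p ^ 2)) • ((2 : ℝ) • JM - p • (LinearMap.id : V →ₗ[ℝ] V))) =
        -(LinearMap.id : V →ₗ[ℝ] V)) ∧
    ((-((1 / Real.sqrt (6 * q - p ^ 2)) • ((2 : ℝ) • JM - p • (LinearMap.id : V →ₗ[ℝ] V)))) ∘ₗ
      (-((1 / Real.sqrt (6 * q - p ^ 2)) • ((2 : ℝ) • JM - p • (LinearMap.id : V →ₗ[ℝ] V)))) =
        -(LinearMap.id : V →ₗ[ℝ] V)) := by
  rw [show 6 * q = 4 * (3 * q / 2) by ring] at hpq ⊢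
  exact metallic_gives_complex_structures_general (A := Module.End ℝ V) hpq h
end

section
/- Let V be a real vector space and let p, q be real numbers with p² < 6q. If J is a linear endomorphism of V satisfying J ∘ J = - id, then both endomorphisms J_M^± := (p/2) • id ± (Real.sqrt (6q - p²)/2) • J satisfy J_M^± ∘ J_M^± - p • J_M^± + (3q/2) • id = 0; i.e., each is an almost complex metallic structure on V. -/
-- When `j ^ 2 = c`, the element `a + b j` of `R[j]` has trace `2 a` and norm `a ^ 2 - c b ^ 2`, so
-- this is its Cayley–Hamilton equation.
theorem mul_self_sub_trace_smul_add_norm_smul_eq_zero {R A : Type*} [CommRing R]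
    [Ring A] [Algebra R A] {c : R} {j : A} (hj : j * j = c • 1) (a b : R) :
    (a • 1 + b • j) * (a • 1 + b • j) - (2 * a) • (a • 1 + b • j)
      + (a ^ 2 - c * b ^ 2) • 1 = 0 := by
  have mul_self_eq : (a • 1 + b • j) * (a • 1 + b • j)
      = (a ^ 2 + c * b ^ 2) • 1 + (2 * a * b) • j := by
    simp only [add_mul, mul_add, smul_mul_smul_comm, one_mul, mul_one, hj]
    module
  rw [mul_self_eq]
  module

theorem complex_gives_metallic_structures_general {K A : Type*} [Field K] [NeZero (2 : K)]
    [Ring A] [Algebra K A] {p q s : K} (hs : s ^ 2 = 6 * q - p ^ 2) {j : A} (hj : j * j = -1) :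
    (((p / 2) • 1 + (s / 2) • j) * ((p / 2) • 1 + (s / 2) • j)
      - p • ((p / 2) • 1 + (s / 2) • j) + (3 * q / 2) • 1 = 0) ∧
    (((p / 2) • 1 - (s / 2) • j) * ((p / 2) • 1 - (s / 2) • j)
      - p • ((p / 2) • 1 - (s / 2) • j) + (3 * q / 2) • 1 = 0) := by
  have trace_eq : 2 * (p / 2) = p := mul_div_cancel₀ p two_ne_zero
  have norm_eq : (p / 2) ^ 2 - (-1) * (s / 2) ^ 2 = 3 * q / 2 := by
    field_simp
    linear_combination hs
  have hj_smul : j * j = (-1 : K) • 1 := by rw [hj, neg_one_smul]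
  have plus := mul_self_sub_trace_smul_add_norm_smul_eq_zero hj_smul (p / 2) (s / 2)
  have minus := mul_self_sub_trace_smul_add_norm_smul_eq_zero hj_smul (p / 2) (-(s / 2))
  rw [neg_sq, neg_smul, ← sub_eq_add_neg] at minus
  rw [trace_eq, norm_eq] at plus minus
  exact ⟨plus, minus⟩

/-- If `J` is an almost complex structure on a real vector space `V`
(with `p² < 6q`), then `J_M^± := (p/2) • id ± (√(6q - p²)/2) • J` are both almost
complex metallic structures on `V`. -/
theorem complex_gives_metallic_structures {V : Type*} [AddCommGroup V] [Module ℝ V]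
    (p q : ℝ) (hpq : p ^ 2 < 6 * q) (J : V →ₗ[ℝ] V)
    (h : J ∘ₗ J = -(LinearMap.id : V →ₗ[ℝ] V)) :
    (((p / 2) • (LinearMap.id : V →ₗ[ℝ] V) + (Real.sqrt (6 * q - p ^ 2) / 2) • J) ∘ₗ
        ((p / 2) • (LinearMap.id : V →ₗ[ℝ] V) + (Real.sqrt (6 * q - p ^ 2) / 2) • J)
      - p • ((p / 2) • (LinearMap.id : V →ₗ[ℝ] V) + (Real.sqrt (6 * q - p ^ 2) / 2) • J)
      + (3 * q / 2) • (LinearMap.id : V →ₗ[ℝ] V) = 0) ∧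
    (((p / 2) • (LinearMap.id : V →ₗ[ℝ] V) - (Real.sqrt (6 * q - p ^ 2) / 2) • J) ∘ₗ
        ((p / 2) • (LinearMap.id : V →ₗ[ℝ] V) - (Real.sqrt (6 * q - p ^ 2) / 2) • J)
      - p • ((p / 2) • (LinearMap.id : V →ₗ[ℝ] V) - (Real.sqrt (6 * q - p ^ 2) / 2) • J)
      + (3 * q / 2) • (LinearMap.id : V →ₗ[ℝ] V) = 0) := by
  exact complex_gives_metallic_structures_general (Real.sq_sqrt (sub_nonneg.2 hpq.le)) h
end

section
/- Let V be a real vector space, p, q real numbers, J_M a linear endomorphism of V with J_M ∘ J_M = p • J_M - (3q/2) • id, and g : V →ₗ V →ₗ ℝ a bilinear form which is hyperbolic with respect to J_M (g(J_M x, y) = - g(x, J_M y) for all x, y). Let A : V →ₗ V →ₗ V be a bilinear map such that A(x, y) = - A(y, x) for all x, y, and A(x, J_M y) + J_M (A(x, y)) = p • A(x, y) for all x, y. Then for all x, y, z ∈ V, g(A(J_M x, y), J_M z) = (3q/2) · g(A(y, x), z). -/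
section

variable {R V N : Type*} [CommRing R] [AddCommGroup V] [Module R V]
  [AddCommGroup N] [Module R N] {p c : R} {J : V →ₗ[R] V} {A : V → V → V}

theorem map_sub_smul_of_comp_self_eq (hJ : J ∘ₗ J = p • J - c • LinearMap.id) (v : V) :
    J (J v - p • v) = -(c • v) := by
  have hJv : J (J v) = p • J v - c • v := LinearMap.congr_fun hJ v
  rw [map_sub, map_smul, hJv, sub_sub_cancel_left]

theorem apply_map_left_eq_map_sub_smul (hanti : ∀ x y, A x y = -A y x)
    (hLeib : ∀ x y, A x (J y) + J (A x y) = p • A x y) (x y : V) :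
    A (J x) y = J (A y x) - p • A y x := by
  rw [hanti, ← hLeib y x, sub_add_cancel_right]

theorem map_apply_map_left_eq_neg_smul (hJ : J ∘ₗ J = p • J - c • LinearMap.id)
    (hanti : ∀ x y, A x y = -A y x)
    (hLeib : ∀ x y, A x (J y) + J (A x y) = p • A x y) (x y : V) :
    J (A (J x) y) = -(c • A y x) := by
  rw [apply_map_left_eq_map_sub_smul hanti hLeib, map_sub_smul_of_comp_self_eq hJ]

theorem nearly_F_identity_general (hJ : J ∘ₗ J = p • J - c • LinearMap.id)
    {g : V →ₗ[R] V →ₗ[R] N} (hg : ∀ x y, g (J x) y = -g x (J y))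
    (hanti : ∀ x y, A x y = -A y x)
    (hLeib : ∀ x y, A x (J y) + J (A x y) = p • A x y) (x y z : V) :
    g (A (J x) y) (J z) = c • g (A y x) z :=
  calc g (A (J x) y) (J z)
    _ = -g (J (A (J x) y)) z := by rw [hg, neg_neg]
    _ = -g (-(c • A y x)) z := by rw [map_apply_map_left_eq_neg_smul hJ hanti hLeib]
    _ = c • g (A y x) z := by rw [LinearMap.map_neg₂, LinearMap.map_smul₂, neg_neg]

end

/-- Pointwise form of `F(J_M X, Y, J_M Z) = (3q/2) F(Y, X, Z)` on a
nearly metallic Kähler manifold, with `A x y` in the role of `(∇_X J_M)Y`. -/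
theorem nearly_F_identity {V : Type*} [AddCommGroup V] [Module ℝ V]
    (p q : ℝ) (JM : V →ₗ[ℝ] V)
    (h : JM ∘ₗ JM = p • JM - (3 * q / 2) • (LinearMap.id : V →ₗ[ℝ] V))
    (g : V →ₗ[ℝ] V →ₗ[ℝ] ℝ)
    (hg : ∀ x y : V, g (JM x) y = - g x (JM y))
    (A : V →ₗ[ℝ] V →ₗ[ℝ] V)
    (hanti : ∀ x y : V, A x y = - A y x)
    (hLeib : ∀ x y : V, A x (JM y) + JM (A x y) = p • A x y) :
    ∀ x y z : V, g (A (JM x) y) (JM z) = (3 * q / 2) * g (A y x) z :=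
  nearly_F_identity_general h hg hanti hLeib
end

section
/- Let V be a real vector space, p, q real numbers with q > 0, J_M a linear endomorphism of V with J_M ∘ J_M = p • J_M - (3q/2) • id, and g : V →ₗ V →ₗ ℝ a bilinear form which is nondegenerate (g(v, w) = 0 for all w implies v = 0). If A and s are linear endomorphisms of V such that g(J_M (s y), z) = -(3/2) · g(A y, z) for all y, z ∈ V, then s = -(1/q) • ((p • id - J_M) ∘ A). -/
/-! With `Ĵ = p • id - J`, the quadratic equation reads `Ĵ ∘ J = c • id`. Nondegeneracy turns the
metric identity into `J ∘ s = k • A`, and composing with `Ĵ` on the left isolates `c • s`. -/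

section

variable {R U V W N : Type*} [CommRing R] [AddCommGroup U] [Module R U] [AddCommGroup V]
  [Module R V] [AddCommGroup W] [Module R W] [AddCommGroup N] [Module R N]

theorem smul_id_sub_comp_self_eq_smul_id {p c : R} {J : V →ₗ[R] V}
    (hJ : J ∘ₗ J = p • J - c • LinearMap.id) :
    (p • LinearMap.id - J) ∘ₗ J = c • LinearMap.id := by
  rw [LinearMap.sub_comp, LinearMap.smul_comp, LinearMap.id_comp, hJ, sub_sub_cancel]

theorem injective_of_separatingLeft {g : V →ₗ[R] W →ₗ[R] N} (hg : g.SeparatingLeft) :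
    Function.Injective g :=
  LinearMap.ker_eq_bot.mp (LinearMap.separatingLeft_iff_ker_eq_bot.mp hg)

theorem second_type_connection_general {p k : R} {c : Rˣ} {J : V →ₗ[R] V}
    (hJ : J ∘ₗ J = p • J - (c : R) • LinearMap.id) {g : V →ₗ[R] W →ₗ[R] N}
    (hg : g.SeparatingLeft) {A s : U →ₗ[R] V} (hs : ∀ u w, g (J (s u)) w = k • g (A u) w) :
    s = (↑c⁻¹ * k) • ((p • LinearMap.id - J) ∘ₗ A) := by
  have J_comp_s : J ∘ₗ s = k • A :=
    LinearMap.ext fun u ↦ injective_of_separatingLeft hg <|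
      LinearMap.ext fun w ↦ by simpa using hs u w
  have c_smul_s : (c : R) • s = k • ((p • LinearMap.id - J) ∘ₗ A) :=
    calc (c : R) • s = ((p • LinearMap.id - J) ∘ₗ J) ∘ₗ s := by
          rw [smul_id_sub_comp_self_eq_smul_id hJ, LinearMap.smul_comp, LinearMap.id_comp]
      _ = k • ((p • LinearMap.id - J) ∘ₗ A) := by
          rw [LinearMap.comp_assoc, J_comp_s, LinearMap.comp_smul]
  rw [mul_smul, ← c_smul_s, smul_smul, Units.inv_mul, one_smul]

end

/-- The linear connection of the second type on a nearly metallic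
Kähler manifold: if `g(J_M (s y), z) = -(3/2) g(A y, z)` for all `y, z`, with `g`
nondegenerate and `q > 0`, then `s = -(1/q) • (Ĵ_M ∘ A)` with `Ĵ_M = p • id - J_M`. -/
theorem second_type_connection {V : Type*} [AddCommGroup V] [Module ℝ V]
    (p q : ℝ) (hq : q > 0) (JM : V →ₗ[ℝ] V)
    (h : JM ∘ₗ JM = p • JM - (3 * q / 2) • (LinearMap.id : V →ₗ[ℝ] V))
    (g : V →ₗ[ℝ] V →ₗ[ℝ] ℝ)
    (hnd : ∀ v : V, (∀ w : V, g v w = 0) → v = 0)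
    (A s : V →ₗ[ℝ] V)
    (hs : ∀ y z : V, g (JM (s y)) z = -(3 / 2) * g (A y) z) :
    s = -(1 / q) • ((p • (LinearMap.id : V →ₗ[ℝ] V) - JM) ∘ₗ A) := by
  rw [show -(1 / q) = (3 * q / 2)⁻¹ * -(3 / 2) by field_simp]
  exact second_type_connection_general (c := Units.mk0 (3 * q / 2) (by positivity)) h hnd hs
end
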